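/- arXiv:2511.07949 — 7 statements merged into one kernel-verified Lean document; each statement's English description precedes it below -/
import Mathlib

section
/- Let Π₀,…,Π_d be pairwise orthogonal orthogonal-projection matrices on ℂ^N with Π₀+⋯+Π_d = I, and let H₁ be an N×N Hermitian matrix. Then the following are equivalent: (i) for every n ∈ {1,…,d} and every density matrix ρ with Tr(Π_n ρ) = 1 one has H₁ρ ≠ ρH₁; (ii) for every j ∈ {1,…,d}, every λ ∈ ℂ, and every vector v in the range of Π_j satisfying Π_j H₁ Π_j v = λ v and Π_i H₁ Π_j v = 0 for all i ≠ j, one has v = 0. -/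
open Matrix
open scoped ComplexOrder

/-!
The range of a matrix `ρ` commuting with `H` is `H`-invariant, so it contains an eigenvector of `H`,
and a state with `Tr (P ρ) = 1` has its range inside that of `P`. Conversely, an eigenvector `v` of
a normal `H` is also an eigenvector of `Hᴴ`, for the conjugate eigenvalue, which makes `H` commute
with the pure state `v vᴴ / ‖v‖²`. Hence `H` commutes with a state supported in the range of `P` iff
that range contains an eigenvector of `H`; the Hautus condition says blockwise that it does not.
-/

theorem exists_mem_hasEigenvector_of_mem_invtSubmodule {K V : Type*} [Field K] [IsAlgClosed K]
    [AddCommGroup V] [Module K V] {f : Module.End K V} {W : Submodule K V} [FiniteDimensional K W]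
    (hfW : W ∈ f.invtSubmodule) (hW : W ≠ ⊥) : ∃ μ, ∃ x ∈ W, f.HasEigenvector μ x := by
  have : Nontrivial W := Submodule.nontrivial_iff_ne_bot.mpr hW
  obtain ⟨μ, hμ⟩ := Module.End.exists_eigenvalue (f.restrict hfW)
  obtain ⟨x, hx⟩ := hμ.exists_hasEigenvector
  refine ⟨μ, x, x.2, Module.End.mem_eigenspace_iff.mpr ?_, Subtype.coe_ne_coe.mpr hx.2⟩
  exact congrArg Subtype.val hx.apply_eq_smul

section Matrices

variable {n : Type*} [Fintype n]

theorem exists_mulVec_eigenvector_of_commute {K : Type*} [Field K] [IsAlgClosed K]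
    {A B : Matrix n n K} (hAB : Commute A B) (hB : B ≠ 0) :
    ∃ (μ : K) (w : n → K), B *ᵥ w ≠ 0 ∧ A *ᵥ (B *ᵥ w) = μ • B *ᵥ w := by
  have hinv : B.mulVecLin.range ∈ Module.End.invtSubmodule A.mulVecLin := by
    rintro _ ⟨y, rfl⟩
    exact ⟨A *ᵥ y, by simp only [mulVecLin_apply, mulVec_mulVec, hAB.eq]⟩
  have hrange : B.mulVecLin.range ≠ ⊥ := fun h ↦
    hB <| ext_iff_mulVec.mpr fun w ↦ by
      simpa using LinearMap.congr_fun (LinearMap.range_eq_bot.mp h) w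
  obtain ⟨μ, _, ⟨w, rfl⟩, hw⟩ := exists_mem_hasEigenvector_of_mem_invtSubmodule hinv hrange
  exact ⟨μ, w, hw.2, hw.apply_eq_smul⟩

theorem conjTranspose_mulVec_eq_zero_of_isStarNormal {R : Type*} [PartialOrder R]
    [NonUnitalRing R] [StarRing R] [StarOrderedRing R] [NoZeroDivisors R] {A : Matrix n n R}
    (hA : IsStarNormal A) {v : n → R} (hv : A *ᵥ v = 0) : Aᴴ *ᵥ v = 0 := by
  rw [← self_mul_conjTranspose_mulVec_eq_zero, ← star_eq_conjTranspose, ← hA.star_comm_self.eq,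
    ← mulVec_mulVec, hv, mulVec_zero]

theorem conjTranspose_mulVec_eq_star_smul_of_isStarNormal {R : Type*} [PartialOrder R]
    [CommRing R] [StarRing R] [StarOrderedRing R] [NoZeroDivisors R] {A : Matrix n n R}
    (hA : IsStarNormal A) {μ : R} {v : n → R} (hv : A *ᵥ v = μ • v) : Aᴴ *ᵥ v = star μ • v := by
  classical
  have hcomm : Commute A (star (μ • 1)) := by
    simpa only [star_smul, star_one] using (Commute.one_right A).smul_right (star μ)
  have hnormal : IsStarNormal (A - μ • 1) :=
    have := IsStarNormal.smul μ (1 : Matrix n n R)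
    hcomm.isStarNormal_sub
  have hker : (A - μ • 1) *ᵥ v = 0 := by
    rw [sub_mulVec, smul_mulVec, one_mulVec, hv, sub_self]
  have hker_star := conjTranspose_mulVec_eq_zero_of_isStarNormal hnormal hker
  rwa [conjTranspose_sub, conjTranspose_smul, conjTranspose_one, sub_mulVec, smul_mulVec,
    one_mulVec, sub_eq_zero] at hker_star

theorem commute_vecMulVec_star_of_isStarNormal {R : Type*} [PartialOrder R]
    [CommRing R] [StarRing R] [StarOrderedRing R] [NoZeroDivisors R] {A : Matrix n n R}
    (hA : IsStarNormal A) {μ : R} {v : n → R} (hv : A *ᵥ v = μ • v) :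
    Commute A (vecMulVec v (star v)) := by
  have hleft : star v ᵥ* A = μ • star v := by
    rw [← conjTranspose_conjTranspose A, ← star_mulVec,
      conjTranspose_mulVec_eq_star_smul_of_isStarNormal hA hv, star_smul, star_star]
  rw [commute_iff_eq, mul_vecMulVec, vecMulVec_mul, hv, hleft, smul_vecMulVec, vecMulVec_smul]

theorem mul_eq_zero_of_trace_mul_mul_conjTranspose_eq_zero {𝕜 m : Type*} [RCLike 𝕜] [Fintype m]
    {ρ : Matrix n n 𝕜} (hρ : ρ.PosSemidef) {A : Matrix m n 𝕜} (h : (A * ρ * Aᴴ).trace = 0) :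
    A * ρ = 0 := by
  classical
  obtain ⟨B, rfl⟩ : ∃ B, ρ = Bᴴ * B := by
    open scoped MatrixOrder in
    exact CStarAlgebra.nonneg_iff_eq_star_mul_self.mp hρ.nonneg
  have hAB : A * Bᴴ = 0 := by
    rw [← trace_mul_conjTranspose_self_eq_zero_iff, ← h]
    simp only [conjTranspose_mul, conjTranspose_conjTranspose, Matrix.mul_assoc]
  rw [← Matrix.mul_assoc, hAB, Matrix.zero_mul]

theorem mulVec_eq_smul_iff_of_completeOrthogonalIdempotents {ι R : Type*} [Fintype ι]
    [DecidableEq n] [CommRing R] {P : ι → Matrix n n R} (hP : CompleteOrthogonalIdempotents P)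
    {j : ι} (H : Matrix n n R) (μ : R) {v : n → R} (hv : P j *ᵥ v = v) :
    H *ᵥ v = μ • v ↔
      (P j * H * P j) *ᵥ v = μ • v ∧ ∀ i, i ≠ j → (P i * H * P j) *ᵥ v = 0 := by
  have hblock (i : ι) : (P i * H * P j) *ᵥ v = P i *ᵥ (H *ᵥ v) := by
    rw [← mulVec_mulVec, hv, ← mulVec_mulVec]
  simp only [hblock]
  constructor
  · intro hHv
    refine ⟨by rw [hHv, mulVec_smul, hv], fun i hij ↦ ?_⟩
    have hiv : P i *ᵥ v = 0 := by rw [← hv, mulVec_mulVec, hP.ortho hij, zero_mulVec]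
    rw [hHv, mulVec_smul, hiv, smul_zero]
  · rintro ⟨hdiag, hoff⟩
    calc H *ᵥ v = ∑ i, P i *ᵥ (H *ᵥ v) := by rw [← sum_mulVec, hP.complete, one_mulVec]
      _ = P j *ᵥ (H *ᵥ v) := Fintype.sum_eq_single j hoff
      _ = μ • v := hdiag

end Matrices

section DensityMatrices

variable {𝕜 n : Type*} [RCLike 𝕜] [Fintype n]

/-- A density matrix, i.e. a state of a finite-dimensional quantum system. -/
def IsDensityMatrix (ρ : Matrix n n 𝕜) : Prop :=
  ρ.PosSemidef ∧ ρ.trace = 1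

/-- The pure state `v vᴴ / ‖v‖²`, the orthogonal projection onto the line spanned by `v`. It makes
a density matrix out of a nonzero vector; for `v = 0` it has the junk value `0`. -/
def pureState (v : n → 𝕜) : Matrix n n 𝕜 :=
  (star v ⬝ᵥ v)⁻¹ • vecMulVec v (star v)

theorem isDensityMatrix_pureState {v : n → 𝕜} (hv : v ≠ 0) : IsDensityMatrix (pureState v) := by
  have hnorm : star v ⬝ᵥ v ≠ 0 := mt dotProduct_star_self_eq_zero.mp hv
  refine ⟨(posSemidef_vecMulVec_self_star v).smul ?_, ?_⟩
  · exact inv_nonneg.mpr (dotProduct_star_self_nonneg v)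
  · rw [pureState, trace_smul, trace_vecMulVec, dotProduct_comm v, smul_eq_mul,
      inv_mul_cancel₀ hnorm]

theorem mul_pureState_of_mulVec_eq {A : Matrix n n 𝕜} {v : n → 𝕜} (hv : A *ᵥ v = v) :
    A * pureState v = pureState v := by
  rw [pureState, mul_smul_comm, mul_vecMulVec, hv]

theorem commute_pureState {A : Matrix n n 𝕜} (hA : IsStarNormal A) {μ : 𝕜} {v : n → 𝕜}
    (hv : A *ᵥ v = μ • v) : Commute A (pureState v) :=
  (commute_vecMulVec_star_of_isStarNormal hA hv).smul_right _

theorem trace_mul_eq_one_iff_mul_eq_self {P ρ : Matrix n n 𝕜}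
    (hP : IsStarProjection P) (hρ : IsDensityMatrix ρ) : (P * ρ).trace = 1 ↔ P * ρ = ρ := by
  classical
  refine ⟨fun htrace ↦ ?_, fun hsupp ↦ by rw [hsupp, hρ.2]⟩
  have hQ : IsStarProjection (1 - P) := hP.one_sub
  have hQρ : ((1 - P) * ρ * (1 - P)ᴴ).trace = 0 := by
    rw [← star_eq_conjTranspose, hQ.isSelfAdjoint.star_eq, trace_mul_comm, ← mul_assoc,
      hQ.isIdempotentElem.eq, sub_mul, one_mul, trace_sub, hρ.2, htrace, sub_self]
  have hzero := mul_eq_zero_of_trace_mul_mul_conjTranspose_eq_zero hρ.1 hQρ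
  rwa [sub_mul, one_mul, sub_eq_zero, eq_comm] at hzero

theorem exists_isDensityMatrix_commute_iff_exists_eigenvector {P H : Matrix n n ℂ}
    (hP : IsStarProjection P) (hH : IsStarNormal H) :
    (∃ ρ, IsDensityMatrix ρ ∧ (P * ρ).trace = 1 ∧ Commute H ρ) ↔
      ∃ (μ : ℂ) (v : n → ℂ), v ≠ 0 ∧ P *ᵥ v = v ∧ H *ᵥ v = μ • v := by
  constructor
  · rintro ⟨ρ, hρ, htrace, hcomm⟩
    have hsupp : P * ρ = ρ := (trace_mul_eq_one_iff_mul_eq_self hP hρ).mp htrace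
    have hρ0 : ρ ≠ 0 := by
      rintro rfl
      exact zero_ne_one ((trace_zero n ℂ).symm.trans hρ.2)
    obtain ⟨μ, w, hw, hHw⟩ := exists_mulVec_eigenvector_of_commute hcomm hρ0
    exact ⟨μ, ρ *ᵥ w, hw, by rw [mulVec_mulVec, hsupp], hHw⟩
  · rintro ⟨μ, v, hv, hPv, hHv⟩
    have hρ := isDensityMatrix_pureState hv
    exact ⟨pureState v, hρ,
      (trace_mul_eq_one_iff_mul_eq_self hP hρ).mpr (mul_pureState_of_mulVec_eq hPv),
      commute_pureState hH hHv⟩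

end DensityMatrices

theorem stmt0_general {ι n : Type*} [Fintype ι] [Fintype n] [DecidableEq n]
    {P : ι → Matrix n n ℂ} (hP : CompleteOrthogonalIdempotents P) {j : ι}
    (hPj : (P j).IsHermitian) {H : Matrix n n ℂ} (hH : IsStarNormal H) :
    (∀ ρ : Matrix n n ℂ, ρ.PosSemidef → ρ.trace = 1 → (P j * ρ).trace = 1 → H * ρ ≠ ρ * H) ↔
      ∀ (μ : ℂ) (v : n → ℂ), P j *ᵥ v = v → (P j * H * P j) *ᵥ v = μ • v →
        (∀ i, i ≠ j → (P i * H * P j) *ᵥ v = 0) → v = 0 := by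
  have hproj : IsStarProjection (P j) := ⟨hP.idem j, hPj⟩
  calc (∀ ρ : Matrix n n ℂ, ρ.PosSemidef → ρ.trace = 1 → (P j * ρ).trace = 1 → H * ρ ≠ ρ * H)
    _ ↔ ¬∃ ρ, IsDensityMatrix ρ ∧ (P j * ρ).trace = 1 ∧ Commute H ρ := by
      simp only [IsDensityMatrix, commute_iff_eq, not_exists, not_and, and_imp, ne_eq]
    _ ↔ ¬∃ (μ : ℂ) (v : n → ℂ), v ≠ 0 ∧ P j *ᵥ v = v ∧ H *ᵥ v = μ • v :=
      not_congr (exists_isDensityMatrix_commute_iff_exists_eigenvector hproj hH)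
    _ ↔ ∀ (μ : ℂ) (v : n → ℂ), P j *ᵥ v = v → H *ᵥ v = μ • v → v = 0 := by
      grind
    _ ↔ _ := forall₂_congr fun μ v ↦ forall_congr' fun hv ↦ by
      rw [mulVec_eq_smul_iff_of_completeOrthogonalIdempotents hP H μ hv, and_imp]

/-- Equivalence between the non-commutation of the control Hamiltonian with every
density matrix supported in a non-target subspace, and the Hautus-type condition A6. -/
theorem stmt0 {N d : ℕ} (P : Fin (d + 1) → Matrix (Fin N) (Fin N) ℂ)
    (hHerm : ∀ i, (P i).IsHermitian)
    (hIdem : ∀ i, P i * P i = P i)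
    (hOrth : ∀ i j, i ≠ j → P i * P j = 0)
    (hSum : ∑ i, P i = 1)
    (H₁ : Matrix (Fin N) (Fin N) ℂ) (hH₁ : H₁.IsHermitian) :
    (∀ n : Fin (d + 1), n ≠ 0 →
      ∀ ρ : Matrix (Fin N) (Fin N) ℂ, ρ.PosSemidef → ρ.trace = 1 →
        (P n * ρ).trace = 1 → H₁ * ρ ≠ ρ * H₁) ↔
    (∀ j : Fin (d + 1), j ≠ 0 → ∀ (lam : ℂ) (v : Fin N → ℂ),
      (P j).mulVec v = v →
      (P j * H₁ * P j).mulVec v = lam • v →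
      (∀ i, i ≠ j → (P i * H₁ * P j).mulVec v = 0) →
      v = 0) := by
  have hP : CompleteOrthogonalIdempotents P := ⟨⟨hIdem, hOrth⟩, hSum⟩
  exact forall₂_congr fun j _ ↦ stmt0_general hP (hHerm j) hH₁.isSelfAdjoint.isStarNormal
end

section
/- Let l̲, l̄, l₀ ∈ ℝ with 0 ≤ l̲ ≤ l̄, and let 0 < χ̲ ≤ χ̄. Define A := l̲² · min{χ̲², 1} and B := 2 l̄ |l₀| · max{1−χ̲, χ̄−1}. Assume condition C3: if l₀ = 0 then l̲ > 0, and if l₀ ≠ 0 then A > B. Then A − B > 0, and for every χ ∈ [χ̲, χ̄] one has l̲² · min{χ², 1} − 2 l̄ |(χ−1) l₀| ≥ A − B. -/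
section OrderedRing

variable {R : Type*} [CommRing R] [LinearOrder R] [IsStrictOrderedRing R]

theorem sq_mul_min_sq_one_pos {a x : R} (ha : a ≠ 0) (hx : x ≠ 0) :
    0 < a ^ 2 * min (x ^ 2) 1 :=
  mul_pos (sq_pos_of_ne_zero ha) (lt_min (sq_pos_of_ne_zero hx) one_pos)

theorem sq_mul_min_sq_one_le_of_le (a : R) {x y : R} (hx : 0 ≤ x) (hxy : x ≤ y) :
    a ^ 2 * min (x ^ 2) 1 ≤ a ^ 2 * min (y ^ 2) 1 := by
  gcongr

theorem abs_sub_mul_le_abs_mul_max (c l : R) {x y z : R} (hxy : x ≤ y) (hyz : y ≤ z) :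
    |(y - c) * l| ≤ |l| * max (c - x) (z - c) :=
  calc |(y - c) * l| = |l| * |y - c| := by rw [abs_mul, mul_comm]
    _ ≤ |l| * max (z - c) (c - x) := by gcongr; exact abs_sub_le_max_sub hxy hyz c
    _ = |l| * max (c - x) (z - c) := by rw [max_comm]

theorem stmt2_general {lmin lmax l0 χmin χmax A B : R} (hlmax : 0 ≤ lmax) (hχmin : 0 < χmin)
    (hA : A = lmin ^ 2 * min (χmin ^ 2) 1)
    (hB : B = 2 * lmax * |l0| * max (1 - χmin) (χmax - 1))
    (hC3 : (l0 = 0 → lmin ≠ 0) ∧ (l0 ≠ 0 → B < A)) :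
    0 < A - B ∧
      ∀ χ : R, χmin ≤ χ → χ ≤ χmax →
        A - B ≤ lmin ^ 2 * min (χ ^ 2) 1 - 2 * lmax * |(χ - 1) * l0| := by
  constructor
  · rcases eq_or_ne l0 0 with hl0 | hl0
    · have hB_zero : B = 0 := by rw [hB, hl0, abs_zero, mul_zero, zero_mul]
      rw [hB_zero, sub_zero, hA]
      exact sq_mul_min_sq_one_pos (hC3.1 hl0) hχmin.ne'
    · exact sub_pos.mpr (hC3.2 hl0)
  · intro χ hmin hmax
    have hA_le : A ≤ lmin ^ 2 * min (χ ^ 2) 1 :=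
      hA.trans_le (sq_mul_min_sq_one_le_of_le lmin hχmin.le hmin)
    have hle_B : 2 * lmax * |(χ - 1) * l0| ≤ B := by
      rw [hB, mul_assoc (2 * lmax)]
      gcongr
      exact abs_sub_mul_le_abs_mul_max 1 l0 hmin hmax
    exact sub_le_sub hA_le hle_B

end OrderedRing

/-- Algebraic content of Lemma 4 (Lem:Stable_positivity): under condition C3 the
drift coefficient stays bounded below by `A - B > 0` uniformly in `χ ∈ [χmin, χmax]`. -/
theorem stmt2 (lmin lmax l0 : ℝ) (hl0 : 0 ≤ lmin) (hll : lmin ≤ lmax)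
    (χmin χmax : ℝ) (hχ0 : 0 < χmin) (hχχ : χmin ≤ χmax)
    (A B : ℝ)
    (hA : A = lmin ^ 2 * min (χmin ^ 2) 1)
    (hB : B = 2 * lmax * |l0| * max (1 - χmin) (χmax - 1))
    (hC3 : (l0 = 0 → 0 < lmin) ∧ (l0 ≠ 0 → B < A)) :
    0 < A - B ∧
      ∀ χ : ℝ, χmin ≤ χ → χ ≤ χmax →
        A - B ≤ lmin ^ 2 * min (χ ^ 2) 1 - 2 * lmax * |(χ - 1) * l0| :=
  stmt2_general (hl0.trans hll) hχ0 hA hB ⟨fun h ↦ (hC3.1 h).ne', hC3.2⟩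
end

section
/- Let Π₀ be an orthogonal-projection matrix on ℂ^N of rank r, let Π₀^⊥ = I − Π₀, let H₁ be an N×N Hermitian matrix, and set A := Π₀^⊥ H₁ Π₀^⊥ and B := Π₀^⊥ H₁ Π₀. Let ρ be an N×N positive semidefinite Hermitian matrix with Tr(ρ Π₀) = 0 and ρ Aⁱ B = 0 for all i = 0,…,n. If the rank of the block matrix [B, AB, …, AⁿB] is at least N − 1 − r, then rank(ρ) ≤ 1. -/
/-!
Since `ρ` and `P₀` are positive semidefinite, `Tr (ρ P₀) = 0` forces `ρ P₀ = 0`, so `ρ` annihilates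
the columns of `P₀` as well as those of the Kalman matrix `K = [B, AB, …, AⁿB]`. Moreover `P₀ K = 0`
because `A` and `B` take values in the kernel of `P₀`; as `P₀` is Hermitian, its range is orthogonal
to that of `K`. The kernel of `ρ` therefore has dimension at least `rank P₀ + rank K`.
-/

open Matrix
open scoped ComplexOrder

section ConjTranspose

variable {𝕜 l m n : Type*} [Fintype l] [Fintype m] [Fintype n]

theorem disjoint_range_mulVecLin_of_conjTranspose_mul_eq_zero [CommRing 𝕜] [NoZeroDivisors 𝕜]
    [PartialOrder 𝕜] [StarRing 𝕜] [StarOrderedRing 𝕜] {M : Matrix n m 𝕜} {K : Matrix n l 𝕜}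
    (h : Mᴴ * K = 0) :
    Disjoint (LinearMap.range M.mulVecLin) (LinearMap.range K.mulVecLin) := by
  rw [Submodule.disjoint_def]
  rintro _ ⟨x, rfl⟩ ⟨y, hxy⟩
  simp only [mulVecLin_apply] at hxy ⊢
  rw [← dotProduct_star_self_eq_zero]
  calc star (M *ᵥ x) ⬝ᵥ M *ᵥ x = star x ⬝ᵥ (Mᴴ * K) *ᵥ y := by
        rw [star_mulVec, ← dotProduct_mulVec, ← hxy, mulVec_mulVec]
    _ = 0 := by rw [h, zero_mulVec, dotProduct_zero]

theorem rank_fromCols_of_conjTranspose_mul_eq_zero [Field 𝕜] [PartialOrder 𝕜] [StarRing 𝕜]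
    [StarOrderedRing 𝕜] {M : Matrix n m 𝕜} {K : Matrix n l 𝕜} (h : Mᴴ * K = 0) :
    (fromCols M K).rank = M.rank + K.rank := by
  have hrange : LinearMap.range (fromCols M K).mulVecLin =
      LinearMap.range M.mulVecLin ⊔ LinearMap.range K.mulVecLin := by
    simp only [range_mulVecLin, ← Submodule.span_union, ← Set.Sum.elim_range]
    congr 2
    ext (i | i) <;> rfl
  have hfinrank := Submodule.finrank_sup_add_finrank_inf_eq
    (LinearMap.range M.mulVecLin) (LinearMap.range K.mulVecLin)
  rwa [(disjoint_range_mulVecLin_of_conjTranspose_mul_eq_zero h).eq_bot, finrank_bot, add_zero,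
    ← hrange] at hfinrank

end ConjTranspose

section PosSemidef

variable {R 𝕜 n : Type*} [Fintype n]

theorem posSemidef_of_isStarProjection [Ring R] [PartialOrder R] [StarRing R] [StarOrderedRing R]
    {P : Matrix n n R} (hP : IsStarProjection P) : P.PosSemidef := by
  rw [← hP.isIdempotentElem.eq]
  nth_rw 1 [← hP.isSelfAdjoint.star_eq]
  exact posSemidef_conjTranspose_mul_self P

open scoped MatrixOrder in
theorem mul_eq_zero_of_posSemidef_of_trace_mul_eq_zero [RCLike 𝕜] {M P : Matrix n n 𝕜}
    (hM : M.PosSemidef) (hP : P.PosSemidef) (h : (M * P).trace = 0) : M * P = 0 := by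
  classical
  obtain ⟨C, rfl⟩ := CStarAlgebra.nonneg_iff_eq_star_mul_self.mp hM.nonneg
  obtain ⟨D, rfl⟩ := CStarAlgebra.nonneg_iff_eq_star_mul_self.mp hP.nonneg
  have hCD : C * star D = 0 := by
    rw [← trace_mul_conjTranspose_self_eq_zero_iff, ← h, ← star_eq_conjTranspose, star_mul,
      star_star, ← mul_assoc, trace_mul_comm]
    simp only [mul_assoc]
  calc star C * C * (star D * D) = star C * (C * star D) * D := by simp only [mul_assoc]
    _ = 0 := by rw [hCD, mul_zero, zero_mul]

end PosSemidef

section KalmanMatrix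

variable {R l m n : Type*} [Semiring R] [Fintype n] [DecidableEq n]

/-- The Kalman controllability matrix `[B, AB, …, A^(k-1) B]` of a pair `(A, B)`, with `k` blocks.
The column index `(i, j)` stands for the `j`-th column of the block `A ^ i * B`. -/
def kalmanMatrix (A : Matrix n n R) (B : Matrix n m R) (k : ℕ) : Matrix n (Fin k × m) R :=
  of fun i p => (A ^ (p.1 : ℕ) * B) i p.2

theorem mul_kalmanMatrix_eq_zero_iff {M : Matrix l n R} {A : Matrix n n R} {B : Matrix n m R}
    {k : ℕ} : M * kalmanMatrix A B k = 0 ↔ ∀ i : Fin k, M * (A ^ (i : ℕ) * B) = 0 :=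
  ⟨fun h i => Matrix.ext fun a j => congr_fun₂ h a (i, j),
    fun h => Matrix.ext fun a p => congr_fun₂ (h p.1) a p.2⟩

theorem mul_kalmanMatrix_eq_zero_of_semiconjBy {P A C : Matrix n n R} {B : Matrix n m R}
    (hA : SemiconjBy P A C) (hB : P * B = 0) (k : ℕ) : P * kalmanMatrix A B k = 0 :=
  mul_kalmanMatrix_eq_zero_iff.mpr fun i => by
    rw [← Matrix.mul_assoc, (hA.pow_right i).eq, Matrix.mul_assoc, hB, Matrix.mul_zero]

end KalmanMatrix

/-- Some `C` satisfies `SemiconjBy P A C` exactly when the kernel of `P` is invariant under `A`. -/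
theorem stmt3_general {𝕜 m n : Type*} [RCLike 𝕜] [Fintype m] [Fintype n] [DecidableEq n]
    {P A C ρ : Matrix n n 𝕜} {B : Matrix n m 𝕜} {k : ℕ} (hP : P.PosSemidef)
    (hA : SemiconjBy P A C) (hB : P * B = 0) (hρ : ρ.PosSemidef) (htr : (ρ * P).trace = 0)
    (hAnn : ∀ i : Fin k, ρ * (A ^ (i : ℕ) * B) = 0) :
    ρ.rank + P.rank + (kalmanMatrix A B k).rank ≤ Fintype.card n := by
  have hρP : ρ * P = 0 := mul_eq_zero_of_posSemidef_of_trace_mul_eq_zero hρ hP htr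
  have hρK : ρ * kalmanMatrix A B k = 0 := mul_kalmanMatrix_eq_zero_iff.mpr hAnn
  have hPK : Pᴴ * kalmanMatrix A B k = 0 := by
    rw [hP.isHermitian.eq, mul_kalmanMatrix_eq_zero_of_semiconjBy hA hB]
  rw [add_assoc, ← rank_fromCols_of_conjTranspose_mul_eq_zero hPK]
  apply rank_add_rank_le_card_of_mul_eq_zero
  rw [mul_fromCols, hρP, hρK, fromCols_zero]

/-- Core linear-algebraic claim in the proof of Lemma 3: a positive semidefinite
matrix annihilating the target subspace and the Kalman-type column space
`[B, AB, …, AⁿB]` of rank at least `N - 1 - r` has rank at most one. -/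
theorem stmt3 {N n : ℕ} (P0 : Matrix (Fin N) (Fin N) ℂ)
    (hHerm : P0.IsHermitian) (hIdem : P0 * P0 = P0)
    (r : ℕ) (hr : P0.rank = r)
    (H₁ : Matrix (Fin N) (Fin N) ℂ) (hH₁ : H₁.IsHermitian)
    (A B : Matrix (Fin N) (Fin N) ℂ)
    (hA : A = (1 - P0) * H₁ * (1 - P0))
    (hB : B = (1 - P0) * H₁ * P0)
    (ρ : Matrix (Fin N) (Fin N) ℂ) (hρ : ρ.PosSemidef)
    (htr : (ρ * P0).trace = 0)
    (hAnn : ∀ i : Fin (n + 1), ρ * (A ^ (i : ℕ) * B) = 0)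
    (hrank : N - 1 - r ≤
      (Matrix.of fun (i : Fin N) (p : Fin (n + 1) × Fin N) =>
        (A ^ (p.1 : ℕ) * B) i p.2).rank) :
    ρ.rank ≤ 1 := by
  have hPQ : P0 * (1 - P0) = 0 := IsIdempotentElem.mul_one_sub_self hIdem
  have hsum := stmt3_general (C := 0) (posSemidef_of_isStarProjection ⟨hIdem, hHerm⟩)
    (by simp [SemiconjBy, hA, ← mul_assoc, hPQ]) (by simp [hB, ← mul_assoc, hPQ]) hρ htr hAnn
  rw [kalmanMatrix, Fintype.card_fin] at hsum
  omega
end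

section
/- Let d ≥ 1, m ≥ 1, and for each k ∈ {1,…,m} let l_{k,0},…,l_{k,d} ∈ ℝ. Assume (A5): for each k, either l_{k,0} ≤ l_{k,n} for all n ∈ {1,…,d}, or l_{k,0} ≥ l_{k,n} for all n ∈ {1,…,d}. Assume also that for every n ∈ {1,…,d} there exists k with l_{k,0} ≠ l_{k,n}. Then a probability vector p ∈ ℝ^{d+1} satisfies Σ_{j=0}^d l_{k,j} p_j = l_{k,0} for all k ∈ {1,…,m} if and only if p₀ = 1 (equivalently p = e₀). -/
/-! A weighted mean of numbers lying on one side of `c` equals `c` only if every number of positive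
weight equals `c`. Under A5 the common zeros of the `Ψ^k₀` are therefore the probability vectors
whose support lies in `{j | ∀ k, l k j = l k 0}`, and A3 says that this set is `{0}`. -/

theorem apply_eq_one_iff_of_mem_stdSimplex {ι R : Type*} [Fintype ι] [Semiring R] [PartialOrder R]
    [IsOrderedCancelAddMonoid R] {p : ι → R} (hp : p ∈ stdSimplex R ι) (i₀ : ι) :
    p i₀ = 1 ↔ ∀ i ≠ i₀, p i = 0 := by
  classical
  rw [← hp.2, ← Finset.add_sum_erase _ p (Finset.mem_univ i₀), left_eq_add,
    Finset.sum_eq_zero_iff_of_nonneg fun i _ => hp.1 i]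
  simp only [Finset.mem_erase, Finset.mem_univ, and_true]

section WeightedMean

variable {ι R : Type*} [Fintype ι] [Ring R] {p f : ι → R} {c : R}

theorem sum_mul_eq_const_iff_sum_sub_mul_eq_zero (hp : ∑ i, p i = 1) :
    ∑ i, f i * p i = c ↔ ∑ i, (f i - c) * p i = 0 := by
  simp only [sub_mul, Finset.sum_sub_distrib, ← Finset.mul_sum, hp, mul_one, sub_eq_zero]

variable [PartialOrder R] [IsOrderedRing R] [NoZeroDivisors R]

theorem sum_mul_eq_const_iff_of_const_le (hp : p ∈ stdSimplex R ι) (hf : ∀ i, c ≤ f i) :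
    ∑ i, f i * p i = c ↔ ∀ i, f i ≠ c → p i = 0 := by
  rw [sum_mul_eq_const_iff_sum_sub_mul_eq_zero hp.2, Finset.sum_eq_zero_iff_of_nonneg
    fun i _ => mul_nonneg (sub_nonneg.2 (hf i)) (hp.1 i)]
  simp only [Finset.mem_univ, true_imp_iff, mul_eq_zero, sub_eq_zero, or_iff_not_imp_left, ne_eq]

theorem sum_mul_eq_const_iff_of_le_const (hp : p ∈ stdSimplex R ι) (hf : ∀ i, f i ≤ c) :
    ∑ i, f i * p i = c ↔ ∀ i, f i ≠ c → p i = 0 := by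
  simpa only [neg_mul, Finset.sum_neg_distrib, neg_inj, ne_eq] using
    sum_mul_eq_const_iff_of_const_le hp fun i => neg_le_neg (hf i)

theorem stmt8_general {κ : Sort*} {l : κ → ι → R} {i₀ : ι}
    (hA5 : ∀ k, (∀ i, l k i₀ ≤ l k i) ∨ (∀ i, l k i ≤ l k i₀))
    (hA3 : ∀ i ≠ i₀, ∃ k, l k i₀ ≠ l k i) (hp : p ∈ stdSimplex R ι) :
    (∀ k, ∑ i, l k i * p i = l k i₀) ↔ p i₀ = 1 := by
  have mean_eq_iff (k : κ) : ∑ i, l k i * p i = l k i₀ ↔ ∀ i, l k i ≠ l k i₀ → p i = 0 :=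
    (hA5 k).elim (sum_mul_eq_const_iff_of_const_le hp) (sum_mul_eq_const_iff_of_le_const hp)
  have separated_iff (i : ι) : (∃ k, l k i ≠ l k i₀) ↔ i ≠ i₀ :=
    ⟨fun ⟨_, hk⟩ hi => hk (hi ▸ rfl), fun hi => (hA3 i hi).imp fun _ => Ne.symm⟩
  calc (∀ k, ∑ i, l k i * p i = l k i₀)
    _ ↔ ∀ k i, l k i ≠ l k i₀ → p i = 0 := forall_congr' mean_eq_iff
    _ ↔ ∀ i, (∃ k, l k i ≠ l k i₀) → p i = 0 := by rw [forall_comm]; simp only [exists_imp]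
    _ ↔ ∀ i ≠ i₀, p i = 0 := by simp only [separated_iff]
    _ ↔ p i₀ = 1 := (apply_eq_one_iff_of_mem_stdSimplex hp i₀).symm

end WeightedMean

/-- Under assumptions A3 and A5, the common zero set within the simplex of the
functions `Ψ^k₀(p) = l_{k,0} − Σ_j l_{k,j} p_j` is the vertex `e₀`. -/
theorem stmt8 {d m : ℕ} (hd : 1 ≤ d) (hm : 1 ≤ m)
    (l : Fin m → Fin (d + 1) → ℝ)
    (hA5 : ∀ k, (∀ n : Fin d, l k 0 ≤ l k n.succ) ∨ (∀ n : Fin d, l k n.succ ≤ l k 0))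
    (hA3 : ∀ n : Fin d, ∃ k, l k 0 ≠ l k n.succ)
    (p : Fin (d + 1) → ℝ) (hp0 : ∀ j, 0 ≤ p j) (hp1 : ∑ j, p j = 1) :
    (∀ k, ∑ j, l k j * p j = l k 0) ↔ p 0 = 1 :=
  stmt8_general (by simpa [Fin.forall_fin_succ] using hA5)
    (by simpa [Fin.forall_fin_succ] using hA3) ⟨hp0, hp1⟩
end

section
/- Let ρ be a density matrix on ℂ^N and Π₀ an orthogonal-projection matrix on ℂ^N. Then, with ‖·‖ the Hilbert–Schmidt (Frobenius) norm, ‖ρ − Π₀ρΠ₀‖² ≤ 3 (1 − Tr(ρΠ₀)). -/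
open Matrix
open scoped ComplexOrder

/-!
Put `Q = 1 - P`. Since `P * (ρ - P * ρ * P) = P * ρ * Q` and `Q * (ρ - P * ρ * P) = Q * ρ`,
Pythagoras gives `‖ρ - P * ρ * P‖² = ‖P * ρ * Q‖² + ‖Q * ρ‖²`. Factoring `ρ = Cᴴ * C`, the
Cauchy–Schwarz inequality bounds the two terms by `tr(ρP) tr(ρQ)` and `tr(ρQ) tr(ρ)`, and these
add up to `(tr ρ)² - (tr ρP)²`. For a density matrix, with `t = tr(ρP) ≤ 1`, this is
`1 - t² ≤ 2 (1 - t)`, which is sharper than the constant `3` requires.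
-/

section Frobenius

open scoped Matrix.Norms.Frobenius

variable {𝕜 l m n : Type*} [RCLike 𝕜] [Fintype l] [Fintype m] [Fintype n]

theorem frobenius_norm_sq_eq_sum (A : Matrix m n 𝕜) : ‖A‖ ^ 2 = ∑ i, ∑ j, ‖A i j‖ ^ 2 := by
  simp only [frobenius_norm_def, Real.rpow_two, ← Real.sqrt_eq_rpow]
  exact Real.sq_sqrt (by positivity)

theorem frobenius_norm_sq_eq_re_trace_mul_conjTranspose (A : Matrix m n 𝕜) :
    ‖A‖ ^ 2 = RCLike.re (A * Aᴴ).trace := by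
  simp only [frobenius_norm_sq_eq_sum, trace, diag_apply, mul_apply, conjTranspose_apply, map_sum,
    RCLike.star_def, RCLike.mul_conj, ← RCLike.ofReal_pow, RCLike.ofReal_re]

theorem frobenius_norm_sq_eq_re_trace_conjTranspose_mul (A : Matrix m n 𝕜) :
    ‖A‖ ^ 2 = RCLike.re (Aᴴ * A).trace := by
  rw [trace_mul_comm, frobenius_norm_sq_eq_re_trace_mul_conjTranspose]

theorem frobenius_norm_sq_eq_add_of_isStarProjection [DecidableEq m] {P : Matrix m m 𝕜}
    (hP : IsStarProjection P) (X : Matrix m n 𝕜) :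
    ‖X‖ ^ 2 = ‖P * X‖ ^ 2 + ‖(1 - P) * X‖ ^ 2 := by
  have gram_mul {R : Matrix m m 𝕜} (hR : IsStarProjection R) :
      (R * X)ᴴ * (R * X) = Xᴴ * (R * X) := by
    rw [conjTranspose_mul, hR.isSelfAdjoint.isHermitian.eq, Matrix.mul_assoc,
      ← Matrix.mul_assoc R R X, hR.isIdempotentElem.eq]
  simp only [frobenius_norm_sq_eq_re_trace_conjTranspose_mul, gram_mul hP, gram_mul hP.one_sub]
  rw [← map_add, ← trace_add, ← Matrix.mul_add, ← Matrix.add_mul, add_sub_cancel, Matrix.one_mul]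

theorem frobenius_norm_mul_mul_sq_le_of_posSemidef {ρ : Matrix m m 𝕜} (hρ : ρ.PosSemidef)
    (A : Matrix l m 𝕜) (B : Matrix m n 𝕜) :
    ‖A * ρ * B‖ ^ 2 ≤ RCLike.re (A * ρ * Aᴴ).trace * RCLike.re (Bᴴ * ρ * B).trace := by
  classical
  obtain ⟨C, rfl⟩ : ∃ C : Matrix m m 𝕜, ρ = Cᴴ * C := by
    open scoped MatrixOrder in
    exact CStarAlgebra.nonneg_iff_eq_star_mul_self.mp hρ.nonneg
  calc ‖A * (Cᴴ * C) * B‖ ^ 2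
      = ‖(A * Cᴴ) * (C * B)‖ ^ 2 := by simp only [Matrix.mul_assoc]
    _ ≤ (‖A * Cᴴ‖ * ‖C * B‖) ^ 2 := by gcongr; exact frobenius_norm_mul _ _
    _ = RCLike.re (A * (Cᴴ * C) * Aᴴ).trace * RCLike.re (Bᴴ * (Cᴴ * C) * B).trace := by
        rw [mul_pow, frobenius_norm_sq_eq_re_trace_mul_conjTranspose (A * Cᴴ),
          frobenius_norm_sq_eq_re_trace_conjTranspose_mul (C * B)]
        simp only [conjTranspose_mul, conjTranspose_conjTranspose, Matrix.mul_assoc]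

theorem trace_mul_mul_self_of_isIdempotentElem {R : Type*} [CommSemiring R] {P : Matrix n n R}
    (hP : IsIdempotentElem P) (A : Matrix n n R) : (P * A * P).trace = (A * P).trace := by
  rw [trace_mul_cycle, hP.eq, trace_mul_comm]

theorem frobenius_norm_mul_mul_sq_le_of_isStarProjection {ρ P Q : Matrix n n 𝕜}
    (hρ : ρ.PosSemidef) (hP : IsStarProjection P) (hQ : IsStarProjection Q) :
    ‖P * ρ * Q‖ ^ 2 ≤ RCLike.re (ρ * P).trace * RCLike.re (ρ * Q).trace := by
  simpa only [hP.isSelfAdjoint.isHermitian.eq, hQ.isSelfAdjoint.isHermitian.eq,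
    trace_mul_mul_self_of_isIdempotentElem hP.isIdempotentElem,
    trace_mul_mul_self_of_isIdempotentElem hQ.isIdempotentElem]
    using frobenius_norm_mul_mul_sq_le_of_posSemidef hρ P Q

theorem stmt11_general {ρ P : Matrix n n 𝕜} (hρ : ρ.PosSemidef) (hP : IsStarProjection P) :
    ‖ρ - P * ρ * P‖ ^ 2 ≤ RCLike.re ρ.trace ^ 2 - RCLike.re (ρ * P).trace ^ 2 := by
  classical
  have mul_P : P * (ρ - P * ρ * P) = P * ρ * (1 - P) := by
    simp only [mul_sub, mul_one, ← mul_assoc, hP.isIdempotentElem.eq]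
  have mul_Q : (1 - P) * (ρ - P * ρ * P) = (1 - P) * ρ * 1 := by
    simp only [mul_sub (1 - P), ← mul_assoc, hP.one_sub_mul_self, zero_mul, sub_zero, mul_one]
  have trace_Q : RCLike.re (ρ * (1 - P)).trace = RCLike.re ρ.trace - RCLike.re (ρ * P).trace := by
    rw [mul_sub, mul_one, trace_sub, map_sub]
  calc ‖ρ - P * ρ * P‖ ^ 2
      = ‖P * ρ * (1 - P)‖ ^ 2 + ‖(1 - P) * ρ * 1‖ ^ 2 := by
        rw [frobenius_norm_sq_eq_add_of_isStarProjection hP, mul_P, mul_Q]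
    _ ≤ RCLike.re (ρ * P).trace * RCLike.re (ρ * (1 - P)).trace
        + RCLike.re (ρ * (1 - P)).trace * RCLike.re (ρ * 1).trace :=
        add_le_add (frobenius_norm_mul_mul_sq_le_of_isStarProjection hρ hP hP.one_sub)
          (frobenius_norm_mul_mul_sq_le_of_isStarProjection hρ hP.one_sub (.one _))
    _ = RCLike.re ρ.trace ^ 2 - RCLike.re (ρ * P).trace ^ 2 := by
        rw [trace_Q, mul_one]
        ring

end Frobenius

/-- The Hilbert–Schmidt distance to the target block satisfies
`‖ρ − Π₀ρΠ₀‖² ≤ 3(1 − Tr(ρΠ₀))`; here the squared Hilbert–Schmidt (Frobenius)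
norm of `M` is written as `Re Tr(M Mᴴ)`. -/
theorem stmt11 {N : ℕ} (ρ P0 : Matrix (Fin N) (Fin N) ℂ)
    (hρ : ρ.PosSemidef) (htr : ρ.trace = 1)
    (hHerm : P0.IsHermitian) (hIdem : P0 * P0 = P0) :
    ((ρ - P0 * ρ * P0) * (ρ - P0 * ρ * P0)ᴴ).trace.re ≤
      3 * (1 - ((ρ * P0).trace).re) := by
  have bound := stmt11_general hρ ⟨hIdem, hHerm⟩
  have nonneg := (sq_nonneg _).trans bound
  simp only [frobenius_norm_sq_eq_re_trace_mul_conjTranspose, htr, RCLike.re_to_complex,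
    Complex.one_re] at bound nonneg
  linarith [sq_nonneg (1 - (ρ * P0).trace.re)]
end

section
/- Let Π₀ be an orthogonal-projection matrix on ℂ^N and Π₀^⊥ = I − Π₀. Let H be Hermitian with H Π₀ = Π₀ H; let L₁,…,L_m be matrices commuting with Π₀ and γ₁,…,γ_m ≥ 0; and let C₁,…,C_{m̄} be matrices satisfying Π₀^⊥ C_k Π₀ = 0 for all k and Σ_{k=1}^{m̄} (Π₀ C_k* Π₀)(Π₀ C_k Π₀^⊥) = 0. Then for any N×N matrix ρ with ρ = Π₀ ρ Π₀, the operator G := −i(Hρ − ρH) + Σ_k γ_k (L_k ρ L_k* − ½L_k*L_k ρ − ½ρ L_k*L_k) + Σ_k (C_k ρ C_k* − ½C_k*C_k ρ − ½ρ C_k*C_k) satisfies G = Π₀ G Π₀; moreover, for each k, Lρ + ρL* with L = L_k satisfies Π₀(L_kρ + ρL_k*)Π₀ = L_kρ + ρL_k*. -/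
open Matrix

/-!
Everything happens in the corner `p A p`. It is stable under left multiplication by any `a` whose
block `(1 - p) a p` vanishes, and under right multiplication by `star a`; this settles the jump
terms `C_k ρ C_k*` one at a time. The terms `C_k* C_k ρ` need not lie in the corner individually,
but given `(1 - p) C_k p = 0` the sum `∑ (p C_k* p) (p C_k (1 - p))` is the off-diagonal block of
the self-adjoint element `∑ C_k* C_k`; when it vanishes, that element commutes with `p`.
-/

section Commute

variable {A : Type*} [Semigroup A] {p a : A}

lemma mul_mul_eq_mul_right_of_commute (hp : IsIdempotentElem p) (ha : Commute a p) :
    p * a * p = a * p := by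
  rw [← ha.eq, mul_assoc, hp.eq]

lemma mul_mul_eq_mul_left_of_commute (hp : IsIdempotentElem p) (ha : Commute a p) :
    p * a * p = p * a := by
  rw [mul_assoc, ha.eq, ← mul_assoc, hp.eq]

end Commute

section Corner

variable {A : Type*} [NonUnitalRing A] {p a x : A}

lemma mem_corner_iff_mul_mul_eq (hp : IsIdempotentElem p) :
    x ∈ NonUnitalRing.corner p ↔ p * x * p = x := by
  refine ⟨fun hx => ?_, fun hx => ⟨x, hx⟩⟩
  obtain ⟨hl, hr⟩ := (Subsemigroup.mem_corner_iff hp).mp hx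
  rw [hl, hr]

lemma mul_mem_corner_of_mul_mul_eq_right (hp : IsIdempotentElem p) (ha : p * a * p = a * p)
    (hx : x ∈ NonUnitalRing.corner p) : a * x ∈ NonUnitalRing.corner p := by
  obtain ⟨hl, hr⟩ := (Subsemigroup.mem_corner_iff hp).mp hx
  refine (Subsemigroup.mem_corner_iff hp).mpr ⟨?_, by rw [mul_assoc, hr]⟩
  calc p * (a * x) = p * a * p * x := by rw [mul_assoc (p * a), hl, mul_assoc]
    _ = a * x := by rw [ha, mul_assoc, hl]

lemma mul_mem_corner_of_mul_mul_eq_left (hp : IsIdempotentElem p) (ha : p * a * p = p * a)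
    (hx : x ∈ NonUnitalRing.corner p) : x * a ∈ NonUnitalRing.corner p := by
  obtain ⟨hl, hr⟩ := (Subsemigroup.mem_corner_iff hp).mp hx
  refine (Subsemigroup.mem_corner_iff hp).mpr ⟨by rw [← mul_assoc, hl], ?_⟩
  calc x * a * p = x * (p * a * p) := by rw [mul_assoc p, ← mul_assoc x p, hr, mul_assoc]
    _ = x * a := by rw [ha, ← mul_assoc, hr]

lemma commute_mul_mem_corner (hp : IsIdempotentElem p) (ha : Commute a p)
    (hx : x ∈ NonUnitalRing.corner p) : a * x ∈ NonUnitalRing.corner p :=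
  mul_mem_corner_of_mul_mul_eq_right hp (mul_mul_eq_mul_right_of_commute hp ha) hx

lemma mul_commute_mem_corner (hp : IsIdempotentElem p) (ha : Commute a p)
    (hx : x ∈ NonUnitalRing.corner p) : x * a ∈ NonUnitalRing.corner p :=
  mul_mem_corner_of_mul_mul_eq_left hp (mul_mul_eq_mul_left_of_commute hp ha) hx

lemma smul_mem_corner {R : Type*} [SMul R A] [IsScalarTower R A A] [SMulCommClass R A A]
    (r : R) (hx : x ∈ NonUnitalRing.corner p) : r • x ∈ NonUnitalRing.corner p := by
  obtain ⟨y, rfl⟩ := hx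
  exact ⟨r • y, by simp only [mul_smul_comm, smul_mul_assoc]⟩

end Corner

lemma one_sub_mul_mul_eq_zero_iff {A : Type*} [NonAssocRing A] {p a : A} :
    (1 - p) * a * p = 0 ↔ p * a * p = a * p := by
  rw [sub_mul, sub_mul, one_mul, sub_eq_zero, eq_comm]

section Star

variable {A : Type*}

lemma commute_star_left_of_isSelfAdjoint [Mul A] [StarMul A] {p a : A} (hp : IsSelfAdjoint p)
    (ha : Commute a p) : Commute (star a) p := by
  simpa only [hp.star_eq] using ha.star_star

lemma mul_star_mul_eq_mul_star [Semigroup A] [StarMul A] {p a : A} (hp : IsSelfAdjoint p)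
    (ha : p * a * p = a * p) : p * star a * p = p * star a := by
  simpa only [star_mul, hp.star_eq, ← mul_assoc] using congrArg star ha

lemma commute_of_mul_mul_one_sub_eq_zero [Ring A] [StarRing A] {p a : A} (hp : IsSelfAdjoint p)
    (ha : IsSelfAdjoint a) (h : p * a * (1 - p) = 0) : Commute a p := by
  have hpa : p * a = p * a * p := by rwa [mul_sub, mul_one, sub_eq_zero] at h
  have hap : a * p = p * a * p := by
    simpa only [star_mul, hp.star_eq, ha.star_eq, ← mul_assoc] using congrArg star hpa
  exact hap.trans hpa.symm

lemma commute_sum_star_mul_self [Ring A] [StarRing A] {p : A} (hp : IsStarProjection p)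
    {ι : Type*} {s : Finset ι} {C : ι → A} (hQ : ∀ k ∈ s, (1 - p) * C k * p = 0)
    (hS : ∑ k ∈ s, (p * star (C k) * p) * (p * C k * (1 - p)) = 0) :
    Commute (∑ k ∈ s, star (C k) * C k) p := by
  have hsa : IsSelfAdjoint (∑ k ∈ s, star (C k) * C k) :=
    isSelfAdjoint_sum s fun k _ => .star_mul_self (C k)
  refine commute_of_mul_mul_one_sub_eq_zero hp.isSelfAdjoint hsa ?_
  rw [← hS, Finset.mul_sum, Finset.sum_mul]
  refine Finset.sum_congr rfl fun k hk => ?_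
  have hstar : p * star (C k) * p = p * star (C k) :=
    mul_star_mul_eq_mul_star hp.isSelfAdjoint (one_sub_mul_mul_eq_zero_iff.mp (hQ k hk))
  calc p * (star (C k) * C k) * (1 - p)
      = p * star (C k) * p * (C k * (1 - p)) := by rw [hstar]; simp only [mul_assoc]
    _ = p * star (C k) * (p * p) * (C k * (1 - p)) := by rw [hp.isIdempotentElem.eq]
    _ = (p * star (C k) * p) * (p * C k * (1 - p)) := by simp only [mul_assoc]

end Star

section Dissipator

variable {A : Type*} [Ring A] [StarRing A] [Algebra ℂ A]

/-- The Lindblad dissipator `D_a(x) = a x a* - ½ a* a x - ½ x a* a` of the jump operator `a`, the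
dissipative part of the generator of a quantum master equation. It is defined in any `*`-ring that
is a complex algebra, with no positivity or trace condition on the state `x`. -/
noncomputable def dissipator (a x : A) : A :=
  a * x * star a - (1 / 2 : ℂ) • (star a * a * x) - (1 / 2 : ℂ) • (x * (star a * a))

variable {ι : Type*} {s : Finset ι}

lemma sum_smul_dissipator (c : ι → ℂ) (V : ι → A) (x : A) :
    ∑ k ∈ s, c k • dissipator (V k) x = ∑ k ∈ s, c k • (V k * x * star (V k))
      - (1 / 2 : ℂ) • ((∑ k ∈ s, c k • (star (V k) * V k)) * x)
      - (1 / 2 : ℂ) • (x * ∑ k ∈ s, c k • (star (V k) * V k)) := by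
  simp only [dissipator, smul_sub, Finset.sum_sub_distrib, Finset.sum_mul, Finset.mul_sum,
    Finset.smul_sum, smul_mul_assoc, mul_smul_comm, smul_comm (1 / 2 : ℂ)]

variable {p : A}

lemma sum_smul_dissipator_mem_corner (hp : IsStarProjection p) {c : ι → ℂ} {V : ι → A}
    (hV : ∀ k ∈ s, p * V k * p = V k * p)
    (hK : Commute (∑ k ∈ s, c k • (star (V k) * V k)) p)
    {x : A} (hx : x ∈ NonUnitalRing.corner p) :
    ∑ k ∈ s, c k • dissipator (V k) x ∈ NonUnitalRing.corner p := by
  have hpi := hp.isIdempotentElem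
  have hjump : ∀ k ∈ s, V k * x * star (V k) ∈ NonUnitalRing.corner p := fun k hk =>
    mul_mem_corner_of_mul_mul_eq_left hpi (mul_star_mul_eq_mul_star hp.isSelfAdjoint (hV k hk))
      (mul_mem_corner_of_mul_mul_eq_right hpi (hV k hk) hx)
  rw [sum_smul_dissipator]
  exact sub_mem (sub_mem (sum_mem fun k hk => smul_mem_corner _ (hjump k hk))
    (smul_mem_corner _ (commute_mul_mem_corner hpi hK hx)))
    (smul_mem_corner _ (mul_commute_mem_corner hpi hK hx))

lemma sum_smul_dissipator_mem_corner_of_commute (hp : IsStarProjection p) {c : ι → ℂ} {L : ι → A}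
    (hL : ∀ k ∈ s, Commute (L k) p) {x : A} (hx : x ∈ NonUnitalRing.corner p) :
    ∑ k ∈ s, c k • dissipator (L k) x ∈ NonUnitalRing.corner p := by
  refine sum_smul_dissipator_mem_corner hp
    (fun k hk => mul_mul_eq_mul_right_of_commute hp.isIdempotentElem (hL k hk)) ?_ hx
  refine Commute.sum_left _ _ _ fun k hk => ?_
  exact ((commute_star_left_of_isSelfAdjoint hp.isSelfAdjoint (hL k hk)).mul_left
    (hL k hk)).smul_left (c k)

lemma sum_dissipator_mem_corner (hp : IsStarProjection p) {C : ι → A}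
    (hQ : ∀ k ∈ s, (1 - p) * C k * p = 0)
    (hS : ∑ k ∈ s, (p * star (C k) * p) * (p * C k * (1 - p)) = 0)
    {x : A} (hx : x ∈ NonUnitalRing.corner p) :
    ∑ k ∈ s, dissipator (C k) x ∈ NonUnitalRing.corner p := by
  have hK := commute_sum_star_mul_self hp hQ hS
  simpa only [one_smul] using sum_smul_dissipator_mem_corner hp (c := fun _ => 1)
    (fun k hk => one_sub_mul_mul_eq_zero_iff.mp (hQ k hk)) (by simpa only [one_smul] using hK) hx

theorem stmt16_general {κ : Type*} [Fintype ι] [Fintype κ] (hp : IsStarProjection p)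
    {h : A} (hh : Commute h p) {L : ι → A} (hL : ∀ k, Commute (L k) p) (γ : ι → ℂ)
    {C : κ → A} (hQ : ∀ k, (1 - p) * C k * p = 0)
    (hS : ∑ k, (p * star (C k) * p) * (p * C k * (1 - p)) = 0)
    {ρ : A} (hρ : ρ = p * ρ * p) {G : A}
    (hG : G = -Complex.I • (h * ρ - ρ * h) + ∑ k, γ k • dissipator (L k) ρ
      + ∑ k, dissipator (C k) ρ) :
    G = p * G * p ∧ ∀ k, p * (L k * ρ + ρ * star (L k)) * p = L k * ρ + ρ * star (L k) := by
  have hpi := hp.isIdempotentElem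
  have hρp : ρ ∈ NonUnitalRing.corner p := (mem_corner_iff_mul_mul_eq hpi).mpr hρ.symm
  have hham : -Complex.I • (h * ρ - ρ * h) ∈ NonUnitalRing.corner p :=
    smul_mem_corner _ (sub_mem (commute_mul_mem_corner hpi hh hρp)
      (mul_commute_mem_corner hpi hh hρp))
  have hGp : G ∈ NonUnitalRing.corner p := hG ▸ add_mem
    (add_mem hham (sum_smul_dissipator_mem_corner_of_commute hp (fun k _ => hL k) hρp))
    (sum_dissipator_mem_corner hp (fun k _ => hQ k) hS hρp)
  refine ⟨((mem_corner_iff_mul_mul_eq hpi).mp hGp).symm, fun k => ?_⟩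
  have hLstar : Commute (star (L k)) p :=
    commute_star_left_of_isSelfAdjoint hp.isSelfAdjoint (hL k)
  exact (mem_corner_iff_mul_mul_eq hpi).mp
    (add_mem (commute_mul_mem_corner hpi (hL k) hρp) (mul_commute_mem_corner hpi hLstar hρp))

end Dissipator

/-- Under assumptions A1 and A2, the target subspace remains invariant under both
the drift and the measurement back-action of the perturbed master equation. -/
theorem stmt16 {N m mbar : ℕ}
    (P0 : Matrix (Fin N) (Fin N) ℂ) (hHerm : P0.IsHermitian) (hIdem : P0 * P0 = P0)
    (H : Matrix (Fin N) (Fin N) ℂ) (hH : H.IsHermitian) (hHP : H * P0 = P0 * H)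
    (L : Fin m → Matrix (Fin N) (Fin N) ℂ) (hLP : ∀ k, L k * P0 = P0 * L k)
    (γ : Fin m → ℝ) (hγ : ∀ k, 0 ≤ γ k)
    (C : Fin mbar → Matrix (Fin N) (Fin N) ℂ)
    (hCQ : ∀ k, (1 - P0) * C k * P0 = 0)
    (hCS : ∑ k, (P0 * (C k)ᴴ * P0) * (P0 * C k * (1 - P0)) = 0)
    (ρ : Matrix (Fin N) (Fin N) ℂ) (hρ : ρ = P0 * ρ * P0)
    (G : Matrix (Fin N) (Fin N) ℂ)
    (hG : G = -Complex.I • (H * ρ - ρ * H)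
      + ∑ k, (γ k : ℂ) •
          (L k * ρ * (L k)ᴴ - (1 / 2 : ℂ) • ((L k)ᴴ * L k * ρ)
            - (1 / 2 : ℂ) • (ρ * ((L k)ᴴ * L k)))
      + ∑ k, (C k * ρ * (C k)ᴴ - (1 / 2 : ℂ) • ((C k)ᴴ * C k * ρ)
            - (1 / 2 : ℂ) • (ρ * ((C k)ᴴ * C k)))) :
    G = P0 * G * P0 ∧
      ∀ k, P0 * (L k * ρ + ρ * (L k)ᴴ) * P0 = L k * ρ + ρ * (L k)ᴴ :=
  stmt16_general ⟨hIdem, hHerm⟩ hHP hLP (fun k => (γ k : ℂ)) hCQ hCS hρ hG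
end

section
/- Let d ≥ 1, m ≥ 1, and for each k ∈ {1,…,m} let l_{k,0},…,l_{k,d} ∈ ℝ. Assume (A5): for each k, either l_{k,0} ≤ l_{k,n} for all n ∈ {1,…,d}, or l_{k,0} ≥ l_{k,n} for all n ∈ {1,…,d}; and assume for every n ∈ {1,…,d} there exists k with l_{k,0} ≠ l_{k,n}. Then for every ζ ∈ (0,1] there exists δ > 0 such that every probability vector p ∈ ℝ^{d+1} with 1 − p₀ ≥ ζ satisfies max_{1≤k≤m} | l_{k,0} − Σ_{j=0}^d l_{k,j} p_j | ≥ δ. -/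
/-!
When `l k o` is extremal in its row, the terms of `l k o - ∑ j, l k j * p j =
∑ j, (l k o - l k j) * p j` all have the same sign, so no cancellation occurs and the absolute value
dominates each `|l k o - l k j| * p j`. Some `j ≠ o` carries at least the average share of the mass
`1 - p o`, and some row `k` separates `j` from `o` by a margin that is uniform because there are
finitely many `j`. This gives a lower bound linear in `1 - p o`, with no appeal to compactness.
-/

theorem exists_gt_forall_exists_le {ι κ α : Type*} [Finite ι] [Nonempty ι] [LinearOrder α]
    {f : ι → κ → α} {a : α} (hf : ∀ i, ∃ k, a < f i k) : ∃ c > a, ∀ i, ∃ k, c ≤ f i k := by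
  choose K hK using hf
  obtain ⟨i₀, hmin⟩ := Finite.exists_min fun i => f i (K i)
  exact ⟨f i₀ (K i₀), hK i₀, fun i => ⟨K i, hmin i⟩⟩

theorem sub_sum_mul_eq_sum_sub_mul {ι R : Type*} [Fintype ι] [Ring R] {p : ι → R}
    (hsum : ∑ j, p j = 1) (a : ι → R) (b : R) :
    b - ∑ j, a j * p j = ∑ j, (b - a j) * p j := by
  simp only [sub_mul, Finset.sum_sub_distrib, ← Finset.mul_sum, hsum, mul_one]

section AbsSubSum

variable {ι R : Type*} [Fintype ι] [Ring R] [LinearOrder R] [IsOrderedRing R]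
  {p a : ι → R} {b : R}

theorem abs_sub_sum_mul_of_forall_le (hp : p ∈ stdSimplex R ι) (hab : ∀ j, a j ≤ b) :
    |b - ∑ j, a j * p j| = ∑ j, |b - a j| * p j := by
  have hnonneg : ∀ j, 0 ≤ b - a j := fun j => sub_nonneg.2 (hab j)
  simp only [sub_sum_mul_eq_sum_sub_mul hp.2, abs_of_nonneg (hnonneg _)]
  exact abs_of_nonneg (Finset.sum_nonneg fun j _ => mul_nonneg (hnonneg j) (hp.1 j))

theorem abs_sub_sum_mul_of_forall_ge (hp : p ∈ stdSimplex R ι) (hab : ∀ j, b ≤ a j) :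
    |b - ∑ j, a j * p j| = ∑ j, |b - a j| * p j := by
  have hneg := abs_sub_sum_mul_of_forall_le hp (a := -a) fun j => neg_le_neg (hab j)
  simpa only [Pi.neg_apply, neg_mul, Finset.sum_neg_distrib, neg_sub_neg, abs_sub_comm] using hneg

theorem abs_sub_mul_le_abs_sub_sum_mul (hp : p ∈ stdSimplex R ι)
    (hab : (∀ j, b ≤ a j) ∨ ∀ j, a j ≤ b) (j : ι) :
    |b - a j| * p j ≤ |b - ∑ i, a i * p i| := by
  rw [hab.elim (abs_sub_sum_mul_of_forall_ge hp) (abs_sub_sum_mul_of_forall_le hp)]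
  exact Finset.single_le_sum (f := fun i => |b - a i| * p i)
    (fun i _ => mul_nonneg (abs_nonneg _) (hp.1 i)) (Finset.mem_univ j)

end AbsSubSum

section LinearOrderedField

variable {ι 𝕜 : Type*} [Fintype ι] [Nontrivial ι] [Field 𝕜] [LinearOrder 𝕜]
  [IsStrictOrderedRing 𝕜]

theorem exists_ne_one_sub_div_card_sub_one_le {p : ι → 𝕜} (hsum : ∑ j, p j = 1) (o : ι) :
    ∃ j ≠ o, (1 - p o) / (Fintype.card ι - 1) ≤ p j := by
  classical
  have hne : (Finset.univ.erase o).Nonempty := Finset.univ_nontrivial.erase_nonempty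
  have hmean : (1 - p o) / (Fintype.card ι - 1) = Finset.expect (Finset.univ.erase o) p := by
    rw [Finset.expect_eq_sum_div_card, Finset.sum_erase_eq_sub (Finset.mem_univ o), hsum,
      Finset.cast_card_erase_of_mem (Finset.mem_univ o), Finset.card_univ]
  obtain ⟨j, hj, hle⟩ := Finset.exists_le_of_le_expect hne hmean.le
  exact ⟨j, Finset.ne_of_mem_erase hj, hle⟩

theorem stmt17_general {κ : Type*} (l : κ → ι → 𝕜) (o : ι)
    (hext : ∀ k, (∀ j, l k o ≤ l k j) ∨ (∀ j, l k j ≤ l k o))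
    (hsep : ∀ j ≠ o, ∃ k, l k o ≠ l k j) :
    ∃ c > 0, ∀ p ∈ stdSimplex 𝕜 ι, ∃ k, c * (1 - p o) ≤ |l k o - ∑ j, l k j * p j| := by
  have : Nonempty {j // j ≠ o} := nonempty_subtype.2 (exists_ne o)
  obtain ⟨c, hc, hmargin⟩ :=
    exists_gt_forall_exists_le (f := fun (j : {j // j ≠ o}) k => |l k o - l k j|)
      fun j => (hsep j j.2).imp fun _ hk => abs_sub_pos.2 hk
  have hcard : (0 : 𝕜) < Fintype.card ι - 1 :=
    sub_pos.2 (Nat.one_lt_cast.2 Fintype.one_lt_card)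
  refine ⟨c / (Fintype.card ι - 1), div_pos hc hcard, fun p hp => ?_⟩
  obtain ⟨j, hj, hpj⟩ := exists_ne_one_sub_div_card_sub_one_le hp.2 o
  obtain ⟨k, hk⟩ := hmargin ⟨j, hj⟩
  refine ⟨k, ?_⟩
  calc c / (Fintype.card ι - 1) * (1 - p o)
      = c * ((1 - p o) / (Fintype.card ι - 1)) := by ring
    _ ≤ c * p j := mul_le_mul_of_nonneg_left hpj hc.le
    _ ≤ |l k o - l k j| * p j := mul_le_mul_of_nonneg_right hk (hp.1 j)
    _ ≤ |l k o - ∑ i, l k i * p i| := abs_sub_mul_le_abs_sub_sum_mul hp (hext k) j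

end LinearOrderedField

/-- Uniform separation of `Ψ^k₀` away from the vertex `e₀`: the compactness step
in the proof of Proposition 1 (Recurrence). -/
theorem stmt17 {d m : ℕ} (hd : 1 ≤ d) (hm : 1 ≤ m)
    (l : Fin m → Fin (d + 1) → ℝ)
    (hA5 : ∀ k, (∀ n : Fin d, l k 0 ≤ l k n.succ) ∨ (∀ n : Fin d, l k n.succ ≤ l k 0))
    (hA3 : ∀ n : Fin d, ∃ k, l k 0 ≠ l k n.succ) :
    ∀ ζ : ℝ, 0 < ζ → ζ ≤ 1 →
      ∃ δ > 0, ∀ p : Fin (d + 1) → ℝ, (∀ j, 0 ≤ p j) → (∑ j, p j = 1) →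
        ζ ≤ 1 - p 0 →
        δ ≤ ⨆ k : Fin m, |l k 0 - ∑ j, l k j * p j| := by
  intro ζ hζ _
  have : Nontrivial (Fin (d + 1)) := Fin.nontrivial_iff_two_le.2 (Nat.succ_le_succ hd)
  obtain ⟨c, hc, hlower⟩ := stmt17_general l 0
    (by simpa only [Fin.forall_fin_succ, le_refl, true_and] using hA5)
    (Fin.forall_fin_succ.2 ⟨fun h => (h rfl).elim, fun n _ => hA3 n⟩)
  refine ⟨c * ζ, mul_pos hc hζ, fun p hp hsum hfar => ?_⟩
  obtain ⟨k, hk⟩ := hlower p ⟨hp, hsum⟩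
  exact (mul_le_mul_of_nonneg_left hfar hc.le).trans
    (hk.trans (Finite.le_ciSup (fun k => |l k 0 - ∑ j, l k j * p j|) k))
end
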